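/- For every real n and every real x with x ≠ 1 and φ₁(x) ≠ 0, the identity φ₀(x)² − 8 φ₂(x) h₂(x) = (x − 2)·[(n−1)² x³ − 2(n−1)(n+5) x² + 4(5n−2) x − 8n] holds, where φ₀(x) = x(2n − (n−1)x), φ₁(x) = n − (n−1)x, φ₂(x) = (1−x)φ₁(x), and h₂(x) = −5/2 + x + (n+x)/(2φ₂(x)). Consequently, a point of the curve δ₄ = {(ℓ,h) : ℓ² = φ₀(x)²/φ₂(x), h = h₂(x)} lies on the parabola h = ℓ²/8 exactly when x = 2 or P(x) = 0, with P(x) = (n−1)² x³ − 2(n−1)(n+5) x² + 4(5n−2) x − 8n. -/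

import Mathlib

/-!
Since `2 φ₂ h₂ = (2x - 5) φ₂ + (n + x)`, the quantity `φ₀² - 8 φ₂ h₂` is a polynomial in `n` and
`x`, and it factors as `(x - 2) P`. A point with `ℓ² = φ₀² / φ₂` and `h = h₂` lies on `h = ℓ² / 8`
exactly when this polynomial vanishes.
-/

namespace Delta4

section CommRing

variable {R : Type*} [CommRing R]

/-- The function `φ₀` of the parametrization of `δ₄`; its square is the numerator of `ℓ²`. -/
def φ₀ (n x : R) : R := x * (2 * n - (n - 1) * x)

/-- The factor `φ₁` of the denominator `φ₂`. -/
def φ₁ (n x : R) : R := n - (n - 1) * x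

/-- The denominator `φ₂` of `ℓ²` on the curve `δ₄`. -/
def φ₂ (n x : R) : R := (1 - x) * φ₁ n x

/-- The cubic `P` whose roots, together with `x = 2`, are the parameters at which `δ₄` meets the
parabola `h = ℓ² / 8`. -/
def cubic (n x : R) : R :=
  (n - 1) ^ 2 * x ^ 3 - 2 * (n - 1) * (n + 5) * x ^ 2 + 4 * (5 * n - 2) * x - 8 * n

theorem φ₀_sq_sub_eq_mul_cubic (n x : R) :
    φ₀ n x ^ 2 - 4 * ((2 * x - 5) * φ₂ n x + (n + x)) = (x - 2) * cubic n x := by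
  simp only [φ₀, φ₁, φ₂, cubic]
  ring

theorem φ₂_ne_zero [NoZeroDivisors R] {n x : R} (hx : x ≠ 1) (hφ₁ : φ₁ n x ≠ 0) : φ₂ n x ≠ 0 :=
  mul_ne_zero (sub_ne_zero.mpr hx.symm) hφ₁

end CommRing

section Field

variable {K : Type*} [Field K]

/-- The coordinate `h` of `δ₄` as a function of the parameter `x`; meaningful where `φ₂ n x ≠ 0`
and `2 ≠ 0`. -/
def h₂ (n x : K) : K := -5 / 2 + x + (n + x) / (2 * φ₂ n x)

theorem two_mul_φ₂_mul_h₂ [NeZero (2 : K)] {n x : K} (hφ₂ : φ₂ n x ≠ 0) :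
    2 * φ₂ n x * h₂ n x = (2 * x - 5) * φ₂ n x + (n + x) := by
  have h_two : (2 : K) ≠ 0 := two_ne_zero
  rw [h₂]
  field_simp
  ring

theorem φ₀_sq_sub_eight_mul_φ₂_mul_h₂ [NeZero (2 : K)] {n x : K} (hφ₂ : φ₂ n x ≠ 0) :
    φ₀ n x ^ 2 - 8 * φ₂ n x * h₂ n x = (x - 2) * cubic n x :=
  calc
    φ₀ n x ^ 2 - 8 * φ₂ n x * h₂ n x = φ₀ n x ^ 2 - 4 * (2 * φ₂ n x * h₂ n x) := by ring
    _ = φ₀ n x ^ 2 - 4 * ((2 * x - 5) * φ₂ n x + (n + x)) := by rw [two_mul_φ₂_mul_h₂ hφ₂]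
    _ = (x - 2) * cubic n x := φ₀_sq_sub_eq_mul_cubic n x

theorem eq_div_div_iff_sub_mul_mul_eq_zero {a b c d : K} (hb : b ≠ 0) (hc : c ≠ 0) :
    d = a / b / c ↔ a - c * b * d = 0 := by
  rw [div_div, eq_div_iff (mul_ne_zero hb hc), sub_eq_zero, eq_comm, mul_comm d, mul_comm b]

theorem h₂_eq_div_eight_iff [NeZero (2 : K)] {n x : K} (hφ₂ : φ₂ n x ≠ 0) :
    h₂ n x = φ₀ n x ^ 2 / φ₂ n x / 8 ↔ x = 2 ∨ cubic n x = 0 := by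
  have h_eight : (8 : K) ≠ 0 := by
    rw [show (8 : K) = 2 ^ 3 by norm_num]
    exact pow_ne_zero 3 two_ne_zero
  rw [eq_div_div_iff_sub_mul_mul_eq_zero hφ₂ h_eight, φ₀_sq_sub_eight_mul_φ₂_mul_h₂ hφ₂,
    mul_eq_zero, sub_eq_zero]

end Field

end Delta4

open Delta4 in
theorem delta4_meets_parabola_general {K : Type*} [Field K] [NeZero (2 : K)] {n x : K}
    (hφ₂ : φ₂ n x ≠ 0) :
    φ₀ n x ^ 2 - 8 * φ₂ n x * h₂ n x = (x - 2) * cubic n x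
    ∧ (∀ ℓ h : K, ℓ ^ 2 = φ₀ n x ^ 2 / φ₂ n x → h = h₂ n x →
        (h = ℓ ^ 2 / 8 ↔ (x = 2 ∨ cubic n x = 0))) := by
  refine ⟨φ₀_sq_sub_eight_mul_φ₂_mul_h₂ hφ₂, fun ℓ h hℓ hh => ?_⟩
  rw [hℓ, hh, h₂_eq_div_eight_iff hφ₂]

/-- The identity
`φ₀(x)² − 8 φ₂(x) h₂(x) = (x − 2)·[(n−1)² x³ − 2(n−1)(n+5) x² + 4(5n−2) x − 8n]`,
and the consequence: a point of the curve `δ₄` lies on the parabola `h = ℓ²/8`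
exactly when `x = 2` or `P(x) = 0`. -/
theorem delta4_meets_parabola
    (n x : ℝ) (hx1 : x ≠ 1)
    (φ₀ φ₁ φ₂ h₂ P : ℝ → ℝ)
    (hφ₀ : ∀ s, φ₀ s = s * (2 * n - (n - 1) * s))
    (hφ₁ : ∀ s, φ₁ s = n - (n - 1) * s)
    (hφ₂ : ∀ s, φ₂ s = (1 - s) * φ₁ s)
    (hh₂ : ∀ s, h₂ s = -5 / 2 + s + (n + s) / (2 * φ₂ s))
    (hP : ∀ s, P s = (n - 1) ^ 2 * s ^ 3 - 2 * (n - 1) * (n + 5) * s ^ 2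
                      + 4 * (5 * n - 2) * s - 8 * n)
    (hφ₁x : φ₁ x ≠ 0) :
    φ₀ x ^ 2 - 8 * φ₂ x * h₂ x = (x - 2) * P x
    ∧ (∀ ℓ h : ℝ, ℓ ^ 2 = φ₀ x ^ 2 / φ₂ x → h = h₂ x →
        (h = ℓ ^ 2 / 8 ↔ (x = 2 ∨ P x = 0))) := by
  simp only [hφ₀, hφ₁, hφ₂, hh₂, hP] at hφ₁x ⊢
  exact delta4_meets_parabola_general (Delta4.φ₂_ne_zero hx1 hφ₁x)
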